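/- arXiv:2501.10853 — 3 statements merged into one kernel-verified Lean document; each statement's English description precedes it below -/
import Mathlib

section
/- For every real 2×2 matrix F one has ‖F‖² + 2·det F ≥ 0, and the squared Euclidean distance of F to SO(2) is given by inf_{R ∈ SO(2)} ‖F − R‖² = ‖F‖² − 2·√(‖F‖² + 2·det F) + 2; moreover this infimum is attained. -/
/-!
Elements of SO(2) are the matrices `!![x, -y; y, x]` with `x² + y² = 1`. With `p = F₀₀ + F₁₁` and
`q = F₁₀ - F₀₁` one has `‖F‖² + 2 det F = p² + q²`, which is nonnegative, and
`‖F - R‖² = ‖F‖² - 2 (p x + q y) + 2`. By Cauchy–Schwarz the maximum of `p x + q y` over the unit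
circle is `√(p² + q²)`, attained at the unit vector in the direction of `(p, q)`.
-/


open Matrix

/-- Squared Frobenius norm of a real matrix. -/
noncomputable def frobSq {n : ℕ} (A : Matrix (Fin n) (Fin n) ℝ) : ℝ :=
  ∑ i, ∑ j, (A i j) ^ 2

/-- The special orthogonal group SO(2) as a set of real 2×2 matrices. -/
def SO2 : Set (Matrix (Fin 2) (Fin 2) ℝ) :=
  {Q | Qᵀ * Q = 1 ∧ Q.det = 1}

lemma mem_SO2_iff (R : Matrix (Fin 2) (Fin 2) ℝ) :
    R ∈ SO2 ↔ ∃ x y : ℝ, x ^ 2 + y ^ 2 = 1 ∧ R = !![x, -y; y, x] := by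
  constructor
  · rintro ⟨h, hd⟩
    have h00 := congrFun (congrFun h 0) 0
    have h11 := congrFun (congrFun h 1) 1
    simp [Matrix.mul_apply, Fin.sum_univ_two] at h00 h11
    rw [Matrix.det_fin_two] at hd
    -- The two unit columns and `det R = 1` give `(R₀₀ - R₁₁)² + (R₀₁ + R₁₀)² = 1 + 1 - 2 = 0`.
    have e1 : R 1 1 = R 0 0 := by
      nlinarith [sq_nonneg (R 0 0 - R 1 1), sq_nonneg (R 0 1 + R 1 0)]
    have e2 : R 0 1 = -R 1 0 := by
      nlinarith [sq_nonneg (R 0 0 - R 1 1), sq_nonneg (R 0 1 + R 1 0)]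
    refine ⟨R 0 0, R 1 0, by linarith, ?_⟩
    ext i j
    fin_cases i <;> fin_cases j <;> simp [e1, e2]
  · rintro ⟨x, y, h, rfl⟩
    refine ⟨?_, ?_⟩
    · ext i j
      fin_cases i <;> fin_cases j <;> simp [Matrix.mul_apply, Fin.sum_univ_two] <;> linarith
    · rw [Matrix.det_fin_two]
      simp
      linarith

lemma frobSq_add_two_det (F : Matrix (Fin 2) (Fin 2) ℝ) :
    frobSq F + 2 * F.det = (F 0 0 + F 1 1) ^ 2 + (F 1 0 - F 0 1) ^ 2 := by
  simp only [frobSq, Fin.sum_univ_two, Matrix.det_fin_two]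
  ring

lemma frobSq_sub_rotation (F : Matrix (Fin 2) (Fin 2) ℝ) {x y : ℝ} (h : x ^ 2 + y ^ 2 = 1) :
    frobSq (F - !![x, -y; y, x]) =
      frobSq F - 2 * ((F 0 0 + F 1 1) * x + (F 1 0 - F 0 1) * y) + 2 := by
  simp [frobSq, Fin.sum_univ_two]
  linear_combination 2 * h

/-- Cauchy–Schwarz in the plane, in the form needed for the lower bound. -/
lemma dot_le_sqrt (p q : ℝ) {x y : ℝ} (h : x ^ 2 + y ^ 2 = 1) :
    p * x + q * y ≤ √(p ^ 2 + q ^ 2) := by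
  apply Real.le_sqrt_of_sq_le
  have key : (p * x + q * y) ^ 2 + (p * y - q * x) ^ 2 = p ^ 2 + q ^ 2 := by
    linear_combination (p ^ 2 + q ^ 2) * h
  linarith [sq_nonneg (p * y - q * x)]

lemma exists_dot_eq_sqrt (p q : ℝ) :
    ∃ x y : ℝ, x ^ 2 + y ^ 2 = 1 ∧ p * x + q * y = √(p ^ 2 + q ^ 2) := by
  have hs : √(p ^ 2 + q ^ 2) ^ 2 = p ^ 2 + q ^ 2 := Real.sq_sqrt (by positivity)
  by_cases h0 : √(p ^ 2 + q ^ 2) = 0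
  · -- Here `p = q = 0`, so any unit vector is a maximizer.
    rw [h0] at hs
    have hp : p = 0 := by nlinarith [sq_nonneg p, sq_nonneg q]
    exact ⟨1, 0, by norm_num, by rw [h0, hp]; ring⟩
  · refine ⟨p / √(p ^ 2 + q ^ 2), q / √(p ^ 2 + q ^ 2), ?_, ?_⟩
    · rw [div_pow, div_pow, ← add_div, hs]
      exact div_self (hs ▸ pow_ne_zero 2 h0)
    · rw [← mul_div_assoc, ← mul_div_assoc, ← add_div, div_eq_iff h0]
      linarith

theorem dist_sq_to_SO2 (F : Matrix (Fin 2) (Fin 2) ℝ) :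
    0 ≤ frobSq F + 2 * F.det ∧
    IsLeast {x : ℝ | ∃ R ∈ SO2, x = frobSq (F - R)}
      (frobSq F - 2 * Real.sqrt (frobSq F + 2 * F.det) + 2) := by
  rw [frobSq_add_two_det]
  refine ⟨by positivity, ?_, ?_⟩
  · obtain ⟨x, y, h, hxy⟩ := exists_dot_eq_sqrt (F 0 0 + F 1 1) (F 1 0 - F 0 1)
    exact ⟨_, (mem_SO2_iff _).2 ⟨x, y, h, rfl⟩, by rw [frobSq_sub_rotation F h, hxy]⟩
  · rintro _ ⟨R, hR, rfl⟩
    obtain ⟨x, y, h, rfl⟩ := (mem_SO2_iff R).1 hR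
    rw [frobSq_sub_rotation F h]
    linarith [dot_le_sqrt (F 0 0 + F 1 1) (F 1 0 - F 0 1) h]
end

section
/- The function F ↦ ( max(√(‖F‖² + 2·det F) − 1, 0) )² is convex on ℝ^{2×2}. -/
/-!
For `F = !![a, b; c, d]` one has `‖F‖² + 2 det F = (a + d)² + (b - c)²`, so the square root is the
modulus of the complex number `(a + d) + (b - c) i`, which depends linearly on `F`. It is therefore
convex, and so are its truncation `max (· - 1) 0` and the square of that nonnegative function.
-/

open Matrix

/-- The linear map `F ↦ (F₀₀ + F₁₁) + (F₀₁ - F₁₀) i`, i.e. twice the conformal part of `F`. -/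
noncomputable def conformalPart : Matrix (Fin 2) (Fin 2) ℝ →ₗ[ℝ] ℂ where
  toFun F := ⟨F 0 0 + F 1 1, F 0 1 - F 1 0⟩
  map_add' F G := by
    apply Complex.ext <;> simp <;> ring
  map_smul' r F := by
    apply Complex.ext <;> simp <;> ring

lemma sqrt_eq_norm_conformalPart (F : Matrix (Fin 2) (Fin 2) ℝ) :
    Real.sqrt (frobSq F + 2 * F.det) = ‖conformalPart F‖ := by
  rw [Complex.norm_def, Complex.normSq_apply]
  congr 1
  simp only [frobSq, Fin.sum_univ_two, Matrix.det_fin_two, conformalPart, LinearMap.coe_mk,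
    AddHom.coe_mk]
  ring

theorem convexOn_relaxed_part :
    ConvexOn ℝ Set.univ (fun F : Matrix (Fin 2) (Fin 2) ℝ =>
      (max (Real.sqrt (frobSq F + 2 * F.det) - 1) 0) ^ 2) := by
  simp only [sqrt_eq_norm_conformalPart]
  have hnorm : ConvexOn ℝ Set.univ
      (fun F : Matrix (Fin 2) (Fin 2) ℝ => ‖conformalPart F‖ - 1) :=
    ((convexOn_norm convex_univ).comp_linearMap conformalPart).sub (concaveOn_const 1 convex_univ)
  exact (hnorm.sup (convexOn_const 0 convex_univ)).pow (fun _ _ => le_max_right _ _) 2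
end

section
/- Define W̃ : ℝ^{2×2} → ℝ by W̃(F) = 1 − 2·det F if ‖F‖² + 2·det F < 1, and W̃(F) = (√(‖F‖² + 2·det F) − 1)² + 1 − 2·det F otherwise. Then W̃ is rank-one convex, and W̃(F) ≤ inf_{R ∈ SO(2)} ‖F − R‖² for all F ∈ ℝ^{2×2}. -/
/-!
For `F = !![a, b; c, d]` put `z = (a + d) + (c - b) i`, a complex number depending linearly on `F`.
Then `‖F‖² + 2 det F = |z|²`, so that `W̃(F) = max(|z| - 1, 0)² + 1 - 2 det F`.
The first summand is a convex function of `F` (a nondecreasing convex function of a norm of a linear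
image), and `det` is affine along rank-one segments; this gives rank-one convexity.

For a rotation `R` by the angle `θ`, `‖F - R‖² = |z|² - 2 Re(z e^{-iθ}) + 2 - 2 det F`, and
`Re(z e^{-iθ}) ≤ |z|` bounds this below by `(|z| - 1)² + 1 - 2 det F ≥ W̃(F)`.
-/

open Matrix

/-- Rank-one convexity for functions on real 2×2 matrices. -/
def RankOneConvex (w : Matrix (Fin 2) (Fin 2) ℝ → ℝ) : Prop :=
  ∀ A B : Matrix (Fin 2) (Fin 2) ℝ, (B - A).rank = 1 →
    ∀ t ∈ Set.Icc (0 : ℝ) 1,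
      w (t • A + (1 - t) • B) ≤ t * w A + (1 - t) * w B

/-- The candidate relaxed energy. -/
noncomputable def Wtilde (F : Matrix (Fin 2) (Fin 2) ℝ) : ℝ :=
  if frobSq F + 2 * F.det < 1 then 1 - 2 * F.det
  else (Real.sqrt (frobSq F + 2 * F.det) - 1) ^ 2 + 1 - 2 * F.det

/-- Twice the conformal part of a 2×2 real matrix, read as a complex number. -/
noncomputable def conf (F : Matrix (Fin 2) (Fin 2) ℝ) : ℂ :=
  ⟨F 0 0 + F 1 1, F 1 0 - F 0 1⟩

lemma norm_conf_sq (F : Matrix (Fin 2) (Fin 2) ℝ) :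
    ‖conf F‖ ^ 2 = frobSq F + 2 * F.det := by
  rw [← Complex.normSq_eq_norm_sq, Complex.normSq_apply]
  simp only [conf, frobSq, Fin.sum_univ_two, Matrix.det_fin_two]
  ring

lemma Wtilde_eq (F : Matrix (Fin 2) (Fin 2) ℝ) :
    Wtilde F = (max (‖conf F‖ - 1) 0) ^ 2 + 1 - 2 * F.det := by
  have h0 := norm_nonneg (conf F)
  unfold Wtilde
  rw [← norm_conf_sq, Real.sqrt_sq h0]
  split_ifs with h
  · rw [max_eq_right (by nlinarith)]
    ring
  · rw [max_eq_left (by nlinarith)]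

lemma norm_conf_combo_le (A B : Matrix (Fin 2) (Fin 2) ℝ) {t : ℝ} (h0 : 0 ≤ t) (h1 : t ≤ 1) :
    ‖conf (t • A + (1 - t) • B)‖ ≤ t * ‖conf A‖ + (1 - t) * ‖conf B‖ := by
  have h : conf (t • A + (1 - t) • B) = t • conf A + (1 - t) • conf B := by
    apply Complex.ext <;> simp [conf] <;> ring
  rw [h]
  refine (norm_add_le _ _).trans_eq ?_
  rw [norm_smul, norm_smul, Real.norm_of_nonneg h0, Real.norm_of_nonneg (sub_nonneg.2 h1)]

lemma det_eq_zero_of_rank_one {M : Matrix (Fin 2) (Fin 2) ℝ} (h : M.rank = 1) : M.det = 0 := by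
  by_contra hd
  have := Matrix.rank_of_isUnit M ((Matrix.isUnit_iff_isUnit_det M).2 (isUnit_iff_ne_zero.2 hd))
  simp [h] at this

/-- The determinant is affine along rank-one segments: its deviation from being affine
is a multiple of `det (B - A)`. -/
lemma det_combo (A B : Matrix (Fin 2) (Fin 2) ℝ) (h : (B - A).rank = 1) (t : ℝ) :
    (t • A + (1 - t) • B).det = t * A.det + (1 - t) * B.det := by
  have hd := det_eq_zero_of_rank_one h
  simp only [Matrix.det_fin_two, Matrix.sub_apply, Matrix.add_apply, Matrix.smul_apply,
    smul_eq_mul] at hd ⊢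
  linear_combination (-t * (1 - t)) * hd

lemma rankOneConvex_Wtilde : RankOneConvex Wtilde := by
  rintro A B h t ⟨h0, h1⟩
  rw [Wtilde_eq, Wtilde_eq, Wtilde_eq, det_combo A B h]
  have hc := norm_conf_combo_le A B h0 h1
  have hst : 0 ≤ 1 - t := sub_nonneg.2 h1
  set p := max (‖conf A‖ - 1) 0 with hp
  set q := max (‖conf B‖ - 1) 0 with hq
  have hp0 : 0 ≤ p := le_max_right _ _
  have hq0 : 0 ≤ q := le_max_right _ _
  have hp1 := mul_le_mul_of_nonneg_left (le_max_left (‖conf A‖ - 1) 0) h0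
  have hq1 := mul_le_mul_of_nonneg_left (le_max_left (‖conf B‖ - 1) 0) hst
  rw [← hp] at hp1
  rw [← hq] at hq1
  have hm : max (‖conf (t • A + (1 - t) • B)‖ - 1) 0 ≤ t * p + (1 - t) * q :=
    max_le (by linarith) (by positivity)
  have hs := pow_le_pow_left₀ (le_max_right _ _) hm 2
  -- Convexity of the square: the gap is `t (1 - t) (p - q)²`.
  nlinarith [mul_nonneg (mul_nonneg h0 hst) (sq_nonneg (p - q))]

lemma Wtilde_le_frobSq_sub (F R : Matrix (Fin 2) (Fin 2) ℝ) (hR : R ∈ SO2) :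
    Wtilde F ≤ frobSq (F - R) := by
  obtain ⟨ho, hd⟩ := hR
  have h00 := congrFun (congrFun ho 0) 0
  have h11 := congrFun (congrFun ho 1) 1
  simp only [Matrix.mul_apply, Fin.sum_univ_two, Matrix.transpose_apply, Matrix.one_apply_eq]
    at h00 h11
  rw [Matrix.det_fin_two] at hd
  -- `(R₀₀ - R₁₁)² + (R₀₁ + R₁₀)² = ‖R‖² - 2 det R = 0`
  have e1 : R 1 1 = R 0 0 := by
    nlinarith [sq_nonneg (R 0 0 - R 1 1), sq_nonneg (R 0 1 + R 1 0)]
  have e2 : R 0 1 = -R 1 0 := by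
    nlinarith [sq_nonneg (R 0 0 - R 1 1), sq_nonneg (R 0 1 + R 1 0)]
  have hn := norm_conf_sq F
  have h0 := norm_nonneg (conf F)
  have hsq : ‖conf F‖ ^ 2 = (F 0 0 + F 1 1) ^ 2 + (F 1 0 - F 0 1) ^ 2 := by
    rw [hn]
    simp only [frobSq, Fin.sum_univ_two, Matrix.det_fin_two]
    ring
  have hu : R 0 0 ^ 2 + R 1 0 ^ 2 = 1 := by nlinarith
  -- Cauchy–Schwarz against the unit vector `(R₀₀, R₁₀)`
  have hcs : (F 0 0 + F 1 1) * R 0 0 + (F 1 0 - F 0 1) * R 1 0 ≤ ‖conf F‖ := by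
    refine le_of_sq_le_sq ?_ h0
    have : ‖conf F‖ ^ 2 = ((F 0 0 + F 1 1) ^ 2 + (F 1 0 - F 0 1) ^ 2)
        * (R 0 0 ^ 2 + R 1 0 ^ 2) := by rw [hu, hsq, mul_one]
    rw [this]
    nlinarith [sq_nonneg ((F 0 0 + F 1 1) * R 1 0 - (F 1 0 - F 0 1) * R 0 0)]
  have hmax : (max (‖conf F‖ - 1) 0) ^ 2 ≤ (‖conf F‖ - 1) ^ 2 := by
    rcases max_cases (‖conf F‖ - 1) 0 with ⟨h, _⟩ | ⟨h, _⟩ <;> rw [h]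
    simpa using sq_nonneg (‖conf F‖ - 1)
  have hexp : frobSq (F - R) = ‖conf F‖ ^ 2 - 2 * F.det + 2
      - 2 * ((F 0 0 + F 1 1) * R 0 0 + (F 1 0 - F 0 1) * R 1 0) := by
    rw [hsq]
    simp only [frobSq, Fin.sum_univ_two, Matrix.det_fin_two, Matrix.sub_apply, e1, e2]
    linear_combination 2 * hu
  rw [Wtilde_eq, hexp]
  nlinarith

theorem Wtilde_rankOneConvex_and_le_dist :
    RankOneConvex Wtilde ∧
    ∀ F : Matrix (Fin 2) (Fin 2) ℝ,
      Wtilde F ≤ sInf {x : ℝ | ∃ R ∈ SO2, x = frobSq (F - R)} := by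
  refine ⟨rankOneConvex_Wtilde, fun F => le_csInf ⟨_, 1, by simp [SO2], rfl⟩ ?_⟩
  rintro _ ⟨R, hR, rfl⟩
  exact Wtilde_le_frobSq_sub F R hR
end
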